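/- arXiv:2502.19388 — 2 statements merged into one kernel-verified Lean document; each statement's English description precedes it below -/
import Mathlib

section
/- Let ι be a finite type, let f : (ι → ℝ) → ℝ≥0∞ be locally bounded (for every compact K ⊆ (ι → ℝ), ⨆_{σ ∈ K} f σ < ∞), let E : (ι → ℝ) → ℝ be locally bounded (for every compact K, sup_{σ ∈ K} |E σ| < ∞), and let x ∈ ι. Then the function σ ↦ f (Function.update σ x (E σ)) is locally bounded. -/
/-- An `ℝ≥0∞`-valued function on program states is locally bounded if its supremum
over every compact set is finite. -/
def LocallyBoundedE {ι : Type*} [Fintype ι] (f : (ι → ℝ) → ENNReal) : Prop :=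
  ∀ K : Set (ι → ℝ), IsCompact K → (⨆ σ ∈ K, f σ) < ⊤

/-- A real-valued function on program states is locally bounded if it is bounded
on every compact set. -/
def LocallyBoundedR {ι : Type*} [Fintype ι] (f : (ι → ℝ) → ℝ) : Prop :=
  ∀ K : Set (ι → ℝ), IsCompact K → ∃ C : ℝ, ∀ σ ∈ K, |f σ| ≤ C

theorem assignment_preserves_locally_bounded
    {ι : Type*} [Fintype ι] [DecidableEq ι]
    (f : (ι → ℝ) → ENNReal) (hf : LocallyBoundedE f)
    (E : (ι → ℝ) → ℝ) (hE : LocallyBoundedR E) (x : ι) :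
    LocallyBoundedE (fun σ => f (Function.update σ x (E σ))) := by
  intro K hK
  obtain ⟨C, hC⟩ := hE K hK
  -- The updated states lie in the image of the compact set `K ×ˢ [-C, C]` under the
  -- continuous map `(σ, ξ) ↦ σ[x ↦ ξ]`, even though `E` itself need not be continuous.
  have hcont : Continuous fun p : (ι → ℝ) × ℝ => Function.update p.1 x p.2 :=
    continuous_fst.update x continuous_snd
  have hcomp := (hK.prod (isCompact_Icc (a := -C) (b := C))).image hcont
  refine lt_of_le_of_lt (iSup₂_le fun σ hσ => ?_) (hf _ hcomp)
  exact le_iSup₂ (f := fun τ _ => f τ) (Function.update σ x (E σ))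
    ⟨(σ, E σ), ⟨hσ, abs_le.mp (hC σ hσ)⟩, rfl⟩
end

section
/- Let ι be a finite type, let f : (ι → ℝ) → ℝ≥0∞ be locally bounded (for every compact K ⊆ (ι → ℝ), ⨆_{σ ∈ K} f σ < ∞), and let x ∈ ι. Then the function σ ↦ ∫⁻_{ξ ∈ [0,1]} f (Function.update σ x ξ) ∂λ is locally bounded. -/
open MeasureTheory

theorem uniform_sampling_preserves_locally_bounded
    {ι : Type*} [Fintype ι] [DecidableEq ι]
    (f : (ι → ℝ) → ENNReal) (hf : LocallyBoundedE f) (x : ι) :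
    LocallyBoundedE (fun σ => ∫⁻ ξ in Set.Icc (0 : ℝ) 1, f (Function.update σ x ξ)) := by
  intro K hK
  -- All states reachable from `K` by sampling `x` in `[0,1]` lie in one compact set, so the sup `M`
  -- of `f` there bounds every integrand, and `[0,1]` has measure one.
  have hcont : Continuous fun p : (ι → ℝ) × ℝ => Function.update p.1 x p.2 :=
    continuous_fst.update x continuous_snd
  have hK' : IsCompact ((fun p : (ι → ℝ) × ℝ => Function.update p.1 x p.2) ''
      (K ×ˢ Set.Icc (0 : ℝ) 1)) :=
    (hK.prod isCompact_Icc).image hcont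
  refine lt_of_le_of_lt (iSup₂_le fun σ hσ => ?_) (hf _ hK')
  set M := ⨆ τ ∈ (fun p : (ι → ℝ) × ℝ => Function.update p.1 x p.2) ''
      (K ×ˢ Set.Icc (0 : ℝ) 1), f τ
  calc ∫⁻ ξ in Set.Icc (0 : ℝ) 1, f (Function.update σ x ξ)
      ≤ ∫⁻ _ in Set.Icc (0 : ℝ) 1, M :=
        setLIntegral_mono' measurableSet_Icc fun ξ hξ =>
          le_iSup₂ (f := fun τ _ => f τ) (Function.update σ x ξ) ⟨(σ, ξ), ⟨hσ, hξ⟩, rfl⟩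
    _ = M := by simp
end
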